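/- Let (M,g) be a Riemannian manifold, u > 0 a smooth function, and X a vector field vanishing on the boundary of a domain with X → 0 at infinity (on an asymptotically flat exterior region). If X satisfies Γ_{(g,u)}(X) := -Δ X - u^{-1}∇X(∇u,·) + u^{-2}X(u)du = 0, then ⟨X, Γ_{(g,u)}(X)⟩ = -(1/2)Δ|X|² - (1/2)u^{-1}∇u·∇|X|² + |∇X|² + u^{-2}(X(u))², and consequently by the strong maximum principle X ≡ 0. -/

import Mathlib

noncomputable section

open scoped BigOperators
open MeasureTheory Filter

/-- Points of the coordinate chart `ℝⁿ`. -/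
abbrev Pt (n : ℕ) := Fin n → ℝ

/-- Partial derivative of a scalar function in the `i`-th coordinate direction. -/
def pd {n : ℕ} (i : Fin n) (f : Pt n → ℝ) (x : Pt n) : ℝ :=
  fderiv ℝ f x (Pi.single i 1)

/-- Inverse metric `g^{ij}` (pointwise matrix inverse). -/
def ginv {n : ℕ} (g : Pt n → Fin n → Fin n → ℝ) (x : Pt n) (i j : Fin n) : ℝ :=
  (Matrix.of (g x))⁻¹ i j

/-- Christoffel symbols `Γ^k_{ij}` of the metric `g`. -/
def chr {n : ℕ} (g : Pt n → Fin n → Fin n → ℝ) (x : Pt n) (k i j : Fin n) : ℝ :=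
  (1/2) * ∑ l, ginv g x k l *
    (pd i (fun y => g y j l) x + pd j (fun y => g y i l) x - pd l (fun y => g y i j) x)

/-- Covariant derivative of a covector field: `X_{i;j}`. -/
def cdCov {n : ℕ} (g : Pt n → Fin n → Fin n → ℝ) (X : Pt n → Fin n → ℝ)
    (x : Pt n) (i j : Fin n) : ℝ :=
  pd j (fun y => X y i) x - ∑ k, chr g x k i j * X x k

/-- Covariant derivative of a vector field: `X^i_{;j}`. -/
def cdVec {n : ℕ} (g : Pt n → Fin n → Fin n → ℝ) (X : Pt n → Fin n → ℝ)
    (x : Pt n) (i j : Fin n) : ℝ :=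
  pd j (fun y => X y i) x + ∑ k, chr g x i k j * X x k

/-- Covariant derivative of a symmetric (0,2)-tensor: `h_{ij;k}`. -/
def cd2 {n : ℕ} (g : Pt n → Fin n → Fin n → ℝ) (h : Pt n → Fin n → Fin n → ℝ)
    (x : Pt n) (i j k : Fin n) : ℝ :=
  pd k (fun y => h y i j) x - ∑ l, chr g x l i k * h x l j - ∑ l, chr g x l j k * h x i l

/-- Second covariant derivative of a covector field: `X_{i;jk}`. -/
def cdCov2 {n : ℕ} (g : Pt n → Fin n → Fin n → ℝ) (X : Pt n → Fin n → ℝ)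
    (x : Pt n) (i j k : Fin n) : ℝ :=
  cd2 g (fun y a b => cdCov g X y a b) x i j k

/-- Riemann curvature tensor `R^l_{ijk}`. -/
def riem {n : ℕ} (g : Pt n → Fin n → Fin n → ℝ) (x : Pt n) (l i j k : Fin n) : ℝ :=
  pd j (fun y => chr g y l i k) x - pd k (fun y => chr g y l i j) x
  + ∑ m, chr g x l m j * chr g x m i k - ∑ m, chr g x l m k * chr g x m i j

/-- Riemann curvature with all indices lowered. -/
def riemLow {n : ℕ} (g : Pt n → Fin n → Fin n → ℝ) (x : Pt n) (a b c d : Fin n) : ℝ :=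
  ∑ l, g x a l * riem g x l b c d

/-- Ricci curvature `R_{ij}`. -/
def ric {n : ℕ} (g : Pt n → Fin n → Fin n → ℝ) (x : Pt n) (i j : Fin n) : ℝ :=
  ∑ l, riem g x l i l j

/-- Lower the index of a vector field using `g`. -/
def lowerV {n : ℕ} (g : Pt n → Fin n → Fin n → ℝ) (X : Pt n → Fin n → ℝ)
    (x : Pt n) (i : Fin n) : ℝ :=
  ∑ j, g x i j * X x j

/-- Lie derivative of the metric `g` along the vector field `X`:
`(L_X g)_{ij} = X_{i;j} + X_{j;i}` (index lowered by `g`). -/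
def lieg {n : ℕ} (g : Pt n → Fin n → Fin n → ℝ) (X : Pt n → Fin n → ℝ)
    (x : Pt n) (i j : Fin n) : ℝ :=
  cdCov g (lowerV g X) x i j + cdCov g (lowerV g X) x j i

/-- Hessian `f_{;ij}`. -/
def hess {n : ℕ} (g : Pt n → Fin n → Fin n → ℝ) (f : Pt n → ℝ)
    (x : Pt n) (i j : Fin n) : ℝ :=
  cdCov g (fun y a => pd a f y) x i j

/-- Laplace–Beltrami operator on functions. -/
def lapf {n : ℕ} (g : Pt n → Fin n → Fin n → ℝ) (f : Pt n → ℝ) (x : Pt n) : ℝ :=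
  ∑ i, ∑ j, ginv g x i j * hess g f x i j

/-- Trace of a (0,2)-tensor with respect to `g`. -/
def trT {n : ℕ} (g : Pt n → Fin n → Fin n → ℝ) (h : Pt n → Fin n → Fin n → ℝ)
    (x : Pt n) : ℝ :=
  ∑ i, ∑ j, ginv g x i j * h x i j

/-- Divergence of a (0,2)-tensor, as a covector. -/
def divT {n : ℕ} (g : Pt n → Fin n → Fin n → ℝ) (h : Pt n → Fin n → Fin n → ℝ)
    (x : Pt n) (i : Fin n) : ℝ :=
  ∑ j, ∑ k, ginv g x j k * cd2 g h x i j k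

/-- Bianchi operator `β_g h = -div_g h + (1/2) d (tr_g h)`. -/
def bianchi {n : ℕ} (g : Pt n → Fin n → Fin n → ℝ) (h : Pt n → Fin n → Fin n → ℝ)
    (x : Pt n) (i : Fin n) : ℝ :=
  -divT g h x i + (1/2) * pd i (fun y => trT g h y) x

/-- Gradient vector field `(∇f)^i`. -/
def gradV {n : ℕ} (g : Pt n → Fin n → Fin n → ℝ) (f : Pt n → ℝ)
    (x : Pt n) (i : Fin n) : ℝ :=
  ∑ j, ginv g x i j * pd j f x

/-- The tensor is symmetric. -/
def symT {n : ℕ} (g : Pt n → Fin n → Fin n → ℝ) : Prop :=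
  ∀ x i j, g x i j = g x j i

/-- `g` is pointwise positive definite. -/
def posdef {n : ℕ} (g : Pt n → Fin n → Fin n → ℝ) : Prop :=
  ∀ (x : Pt n) (v : Fin n → ℝ), v ≠ 0 → 0 < ∑ i, ∑ j, g x i j * v i * v j

/-- Smooth componentwise. -/
def smoothT {n : ℕ} (g : Pt n → Fin n → Fin n → ℝ) : Prop :=
  ∀ i j, ContDiff ℝ (⊤ : ℕ∞) (fun x => g x i j)

/-- The lowered tensor `(T_h)_{ijk} = (1/2)(h_{ij;k} + h_{ik;j} - h_{jk;i})`. -/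
def Tlow {n : ℕ} (g : Pt n → Fin n → Fin n → ℝ) (h : Pt n → Fin n → Fin n → ℝ)
    (x : Pt n) (i j k : Fin n) : ℝ :=
  (1/2) * (cd2 g h x i j k + cd2 g h x i k j - cd2 g h x j k i)

/-- The operator `Γ_{(g,u)}(X) = -ΔX - u⁻¹ ∇X(∇u,·) + u⁻² X(u) du`
acting on covector fields `X`. -/
def GammaOp {n : ℕ} (g : Pt n → Fin n → Fin n → ℝ) (u : Pt n → ℝ)
    (X : Pt n → Fin n → ℝ) (x : Pt n) (i : Fin n) : ℝ :=
  -(∑ j, ∑ k, ginv g x j k * cdCov2 g X x i j k)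
    - (u x)⁻¹ * ∑ j, ∑ k, ginv g x j k * pd k u x * cdCov g X x i j
    + ((u x)^2)⁻¹ * (∑ j, ∑ k, ginv g x j k * X x j * pd k u x) * pd i u x

/-- g-inner product of two covector fields. -/
def innerC {n : ℕ} (g : Pt n → Fin n → Fin n → ℝ) (ω τ : Pt n → Fin n → ℝ)
    (x : Pt n) : ℝ :=
  ∑ i, ∑ j, ginv g x i j * ω x i * τ x j

abbrev Sm {n : ℕ} (f : Pt n → ℝ) : Prop := ContDiff ℝ (⊤ : ℕ∞) f

lemma Sm.da {n : ℕ} {f : Pt n → ℝ} (h : Sm f) (x : Pt n) : DifferentiableAt ℝ f x :=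
  (h.differentiable (by simp)) x

lemma Sm.pd {n : ℕ} {f : Pt n → ℝ} (h : Sm f) (i : Fin n) : Sm (pd i f) := by
  have h1 : ContDiff ℝ (⊤ : ℕ∞) (fderiv ℝ f) := h.fderiv_right (by norm_cast)
  exact h1.clm_apply contDiff_const

lemma Sm.sum {n : ℕ} {ι : Type*} {s : Finset ι} {f : ι → Pt n → ℝ} (h : ∀ i, Sm (f i)) :
    Sm (fun x => ∑ i ∈ s, f i x) := ContDiff.sum (fun i _ => h i)

lemma pd_add' {n : ℕ} {f h : Pt n → ℝ} (hf : Sm f) (hh : Sm h) (i : Fin n) (x : Pt n) :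
    pd i (fun y => f y + h y) x = pd i f x + pd i h x := by
  simp [pd, fderiv_fun_add (hf.da x) (hh.da x)]

lemma pd_mul' {n : ℕ} {f h : Pt n → ℝ} (hf : Sm f) (hh : Sm h) (i : Fin n) (x : Pt n) :
    pd i (fun y => f y * h y) x = pd i f x * h x + f x * pd i h x := by
  simp [pd, fderiv_fun_mul (hf.da x) (hh.da x)]; ring

lemma pd_sum' {n : ℕ} {ι : Type*} {s : Finset ι} {f : ι → Pt n → ℝ} (h : ∀ i, Sm (f i))
    (i : Fin n) (x : Pt n) :
    pd i (fun y => ∑ a ∈ s, f a y) x = ∑ a ∈ s, pd i (f a) x := by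
  simp [pd, fderiv_fun_sum (fun a _ => (h a).da x)]

lemma pd_const' {n : ℕ} (c : ℝ) (i : Fin n) (x : Pt n) :
    pd i (fun _ => c) x = 0 := by
  simp [pd]

section geom
variable {n : ℕ} {g : Pt n → Fin n → Fin n → ℝ}

lemma gPD (hs : symT g) (hp : posdef g) (x : Pt n) : (Matrix.of (g x)).PosDef := by
  apply Matrix.PosDef.of_dotProduct_mulVec_pos
  · ext i j; simp [hs x i j]
  · intro v hv
    have := hp x v hv
    simp only [dotProduct, Matrix.mulVec, Finset.mul_sum, Matrix.of_apply, star_trivial]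
    refine this.trans_eq (Finset.sum_congr rfl fun i _ => Finset.sum_congr rfl fun j _ => by ring)

lemma gdet (hs : symT g) (hp : posdef g) (x : Pt n) : (Matrix.of (g x)).det ≠ 0 :=
  (gPD hs hp x).det_pos.ne'

lemma ginvPD (hs : symT g) (hp : posdef g) (x : Pt n) : ((Matrix.of (g x))⁻¹).PosDef :=
  (gPD hs hp x).inv

lemma ginv_symm (hs : symT g) (hp : posdef g) (x : Pt n) (i j : Fin n) :
    ginv g x i j = ginv g x j i := by
  have := (ginvPD hs hp x).isHermitian.apply i j
  simpa [ginv] using this.symm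

lemma ginv_pos (hs : symT g) (hp : posdef g) (x : Pt n) (v : Fin n → ℝ) (hv : v ≠ 0) :
    0 < ∑ i, ∑ j, ginv g x i j * v i * v j := by
  have := (ginvPD hs hp x).dotProduct_mulVec_pos hv
  simp only [dotProduct, Matrix.mulVec, Finset.mul_sum, star_trivial] at this
  refine this.trans_eq (Finset.sum_congr rfl fun i _ => Finset.sum_congr rfl fun j _ => ?_)
  simp only [ginv]; ring

lemma ginv_fac (hs : symT g) (hp : posdef g) (x : Pt n) :
    ∃ B : Fin n → Fin n → ℝ, ∀ i j, ginv g x i j = ∑ k, B k i * B k j := by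
  obtain ⟨B, hB⟩ : ∃ B : Matrix (Fin n) (Fin n) ℝ, (Matrix.of (g x))⁻¹ = B.conjTranspose * B := by
    open scoped MatrixOrder Matrix.Norms.L2Operator in
    exact CStarAlgebra.nonneg_iff_eq_star_mul_self.mp (ginvPD hs hp x).posSemidef.nonneg
  refine ⟨B, fun i j => ?_⟩
  simp [ginv, hB, Matrix.mul_apply]

lemma ginv_mul_g (hs : symT g) (hp : posdef g) (x : Pt n) (i k : Fin n) :
    ∑ j, ginv g x i j * g x j k = if i = k then 1 else 0 := by
  have := Matrix.nonsing_inv_mul (Matrix.of (g x)) (isUnit_iff_ne_zero.2 (gdet hs hp x))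
  have := congrFun (congrFun this i) k
  simpa [Matrix.mul_apply, Matrix.one_apply, ginv] using this

lemma g_mul_ginv (hs : symT g) (hp : posdef g) (x : Pt n) (i k : Fin n) :
    ∑ j, g x i j * ginv g x j k = if i = k then 1 else 0 := by
  have := Matrix.mul_nonsing_inv (Matrix.of (g x)) (isUnit_iff_ne_zero.2 (gdet hs hp x))
  have := congrFun (congrFun this i) k
  simpa [Matrix.mul_apply, Matrix.one_apply, ginv] using this

lemma det_sm {M : Pt n → Matrix (Fin n) (Fin n) ℝ} (h : ∀ i j, Sm (fun x => M x i j)) :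
    Sm (fun x => (M x).det) := by
  simp only [Matrix.det_apply']
  refine Sm.sum fun σ => ?_
  refine contDiff_const.mul ?_
  exact contDiff_prod fun i _ => h _ _

lemma ginv_sm (hs : symT g) (hp : posdef g) (hg : smoothT g) (i j : Fin n) :
    Sm (fun x => ginv g x i j) := by
  have : (fun x => ginv g x i j) = fun x => ((Matrix.of (g x)).det)⁻¹ *
      ((Matrix.of (g x)).updateRow j (Pi.single i 1)).det := by
    funext x
    simp [ginv, Matrix.inv_def, Matrix.adjugate_apply]
  rw [this]
  refine ContDiff.mul (ContDiff.inv (det_sm fun a b => hg a b) (gdet hs hp)) (det_sm fun a b => ?_)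
  by_cases hab : a = j
  · subst hab; simp only [Matrix.updateRow_self]; exact contDiff_const
  · simp only [Matrix.updateRow_ne hab]; exact hg a b

lemma chr_sm (hs : symT g) (hp : posdef g) (hg : smoothT g) (k i j : Fin n) :
    Sm (fun x => chr g x k i j) := by
  unfold chr
  refine contDiff_const.mul (Sm.sum fun l => (ginv_sm hs hp hg k l).mul ?_)
  exact ((Sm.pd (hg j l) i).add (Sm.pd (hg i l) j)).sub (Sm.pd (hg i j) l)

lemma cdCov_sm (hs : symT g) (hp : posdef g) (hg : smoothT g) {X : Pt n → Fin n → ℝ}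
    (hX : ∀ i, Sm (fun x => X x i)) (i j : Fin n) : Sm (fun x => cdCov g X x i j) := by
  unfold cdCov
  exact ((hX i).pd j).sub (Sm.sum fun k => (chr_sm hs hp hg k i j).mul (hX k))

lemma innerC_sm (hs : symT g) (hp : posdef g) (hg : smoothT g) {X Y : Pt n → Fin n → ℝ}
    (hX : ∀ i, Sm (fun x => X x i)) (hY : ∀ i, Sm (fun x => Y x i)) :
    Sm (fun x => innerC g X Y x) := by
  unfold innerC
  exact Sm.sum fun i => Sm.sum fun j => ((ginv_sm hs hp hg i j).mul (hX i)).mul (hY j)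

lemma chr_symm (hs : symT g) (x : Pt n) (k i j : Fin n) : chr g x k i j = chr g x k j i := by
  unfold chr
  congr 1
  refine Finset.sum_congr rfl fun l _ => ?_
  have : (fun y => g y i j) = fun y => g y j i := by funext y; exact hs y i j
  rw [this]; ring

lemma pd_ginv_aux (hs : symT g) (hp : posdef g) (hg : smoothT g) (x : Pt n) (m i l : Fin n) :
    pd m (fun y => ginv g y i l) x
      = -∑ j, ∑ k, ginv g x i j * ginv g x k l * pd m (fun y => g y j k) x := by
  have h1 : ∀ k, ∑ j, (pd m (fun y => ginv g y i j) x * g x j k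
      + ginv g x i j * pd m (fun y => g y j k) x) = 0 := by
    intro k
    have e : (fun y => ∑ j, ginv g y i j * g y j k) = fun _ => if i = k then (1:ℝ) else 0 := by
      funext y; exact ginv_mul_g hs hp y i k
    have e2 := congrArg (fun f => pd m f x) e
    simp only [pd_const'] at e2
    rw [pd_sum' (fun j => (ginv_sm hs hp hg i j).mul (hg j k))] at e2
    rw [← e2]
    exact Finset.sum_congr rfl fun j _ => (pd_mul' (ginv_sm hs hp hg i j) (hg j k) m x).symm
  have h2 : ∑ k, (∑ j, (pd m (fun y => ginv g y i j) x * g x j k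
      + ginv g x i j * pd m (fun y => g y j k) x)) * ginv g x k l = 0 := by
    simp [h1]
  have h3 : ∑ k, (∑ j, pd m (fun y => ginv g y i j) x * g x j k) * ginv g x k l
      = pd m (fun y => ginv g y i l) x := by
    simp only [Finset.sum_mul, mul_assoc]
    rw [Finset.sum_comm]
    simp only [← Finset.mul_sum, g_mul_ginv hs hp]
    simp
  simp only [Finset.sum_add_distrib, add_mul] at h2
  rw [h3] at h2
  rw [eq_neg_iff_add_eq_zero, ← h2]
  congr 1
  rw [Finset.sum_comm]
  simp only [Finset.sum_mul]
  refine Finset.sum_congr rfl fun j _ => Finset.sum_congr rfl fun k _ => by ring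

lemma pd_ginv (hs : symT g) (hp : posdef g) (hg : smoothT g) (x : Pt n) (m i l : Fin n) :
    pd m (fun y => ginv g y i l) x
      = -∑ k, chr g x i k m * ginv g x k l - ∑ j, chr g x l j m * ginv g x i j := by
  rw [pd_ginv_aux hs hp hg]
  unfold chr
  have e : ∑ k, (1/2 * ∑ j, ginv g x i j *
      (pd k (fun y => g y m j) x + pd m (fun y => g y k j) x - pd j (fun y => g y k m) x))
      * ginv g x k l = ∑ j, ∑ k, 1/2 * ginv g x i j * ginv g x k l *
      (pd k (fun y => g y m j) x + pd m (fun y => g y k j) x - pd j (fun y => g y k m) x) := by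
    rw [Finset.sum_comm]
    refine Finset.sum_congr rfl fun k _ => ?_
    rw [Finset.mul_sum, Finset.sum_mul]
    exact Finset.sum_congr rfl fun j _ => by ring
  have e' : ∑ j, (1/2 * ∑ k, ginv g x l k *
      (pd j (fun y => g y m k) x + pd m (fun y => g y j k) x - pd k (fun y => g y j m) x))
      * ginv g x i j = ∑ j, ∑ k, 1/2 * ginv g x i j * ginv g x k l *
      (pd j (fun y => g y m k) x + pd m (fun y => g y j k) x - pd k (fun y => g y j m) x) := by
    refine Finset.sum_congr rfl fun j _ => ?_
    rw [Finset.mul_sum, Finset.sum_mul]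
    exact Finset.sum_congr rfl fun k _ => by rw [ginv_symm hs hp x l k]; ring
  rw [e, e', ← neg_add', ← Finset.sum_add_distrib]
  congr 1
  refine Finset.sum_congr rfl fun j _ => ?_
  rw [← Finset.sum_add_distrib]
  refine Finset.sum_congr rfl fun k _ => ?_
  have s : ∀ a b, (fun y => g y a b) = fun y => g y b a := fun a b => by
    funext y; exact hs y a b
  rw [s m j, s m k, s k j]; ring

lemma pd_inner (hs : symT g) (hp : posdef g) (hg : smoothT g) {X Y : Pt n → Fin n → ℝ}
    (hX : ∀ i, Sm (fun x => X x i)) (hY : ∀ i, Sm (fun x => Y x i)) (x : Pt n) (m : Fin n) :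
    pd m (fun y => innerC g X Y y) x
      = ∑ i, ∑ j, ginv g x i j * (cdCov g X x i m * Y x j + X x i * cdCov g Y x j m) := by
  unfold innerC
  rw [pd_sum' (fun i => Sm.sum fun j => ((ginv_sm hs hp hg i j).mul (hX i)).mul (hY j))]
  have h1 : ∀ i, pd m (fun y => ∑ j, ginv g y i j * X y i * Y y j) x
     = ∑ j, ((-∑ k, chr g x i k m * ginv g x k j - ∑ k, chr g x j k m * ginv g x i k) * X x i * Y x j
        + ginv g x i j * (pd m (fun y => X y i) x * Y x j + X x i * pd m (fun y => Y y j) x)) := by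
    intro i
    rw [pd_sum' (fun j => ((ginv_sm hs hp hg i j).mul (hX i)).mul (hY j))]
    refine Finset.sum_congr rfl fun j _ => ?_
    rw [pd_mul' ((ginv_sm hs hp hg i j).mul (hX i)) (hY j), pd_mul' (ginv_sm hs hp hg i j) (hX i),
      pd_ginv hs hp hg]
    ring
  simp only [h1, cdCov]
  have A : ∑ i, ∑ j, (∑ k, chr g x i k m * ginv g x k j) * X x i * Y x j
      = ∑ i, ∑ j, ginv g x i j * ((∑ k, chr g x k i m * X x k) * Y x j) := by
    simp only [Finset.sum_mul, Finset.mul_sum]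
    calc _ = ∑ i, ∑ k, ∑ j, chr g x i k m * ginv g x k j * X x i * Y x j :=
          Finset.sum_congr rfl fun i _ => Finset.sum_comm
      _ = ∑ k, ∑ i, ∑ j, chr g x i k m * ginv g x k j * X x i * Y x j := Finset.sum_comm
      _ = ∑ k, ∑ j, ∑ i, chr g x i k m * ginv g x k j * X x i * Y x j :=
          Finset.sum_congr rfl fun i _ => Finset.sum_comm
      _ = _ := Finset.sum_congr rfl fun i _ => Finset.sum_congr rfl fun j _ =>
          Finset.sum_congr rfl fun k _ => by ring
  have B : ∑ i, ∑ j, (∑ k, chr g x j k m * ginv g x i k) * X x i * Y x j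
      = ∑ i, ∑ j, ginv g x i j * (X x i * (∑ k, chr g x k j m * Y x k)) := by
    simp only [Finset.sum_mul, Finset.mul_sum]
    refine Finset.sum_congr rfl fun i _ => ?_
    rw [Finset.sum_comm]
    exact Finset.sum_congr rfl fun j _ => Finset.sum_congr rfl fun k _ => by ring
  have C : ∀ i j, (-∑ k, chr g x i k m * ginv g x k j - ∑ k, chr g x j k m * ginv g x i k)
        * X x i * Y x j
        + ginv g x i j * (pd m (fun y => X y i) x * Y x j + X x i * pd m (fun y => Y y j) x)
      = -((∑ k, chr g x i k m * ginv g x k j) * X x i * Y x j)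
        - (∑ k, chr g x j k m * ginv g x i k) * X x i * Y x j
        + ginv g x i j * (pd m (fun y => X y i) x * Y x j + X x i * pd m (fun y => Y y j) x) :=
    fun i j => by ring
  have D : ∀ i j, ginv g x i j * ((pd m (fun y => X y i) x - ∑ k, chr g x k i m * X x k) * Y x j
        + X x i * (pd m (fun y => Y y j) x - ∑ k, chr g x k j m * Y x k))
      = -(ginv g x i j * ((∑ k, chr g x k i m * X x k) * Y x j))
        - ginv g x i j * (X x i * (∑ k, chr g x k j m * Y x k))
        + ginv g x i j * (pd m (fun y => X y i) x * Y x j + X x i * pd m (fun y => Y y j) x) :=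
    fun i j => by ring
  simp only [C, D, Finset.sum_add_distrib, Finset.sum_sub_distrib, Finset.sum_neg_distrib, A, B]

lemma pd_normsq (hs : symT g) (hp : posdef g) (hg : smoothT g) {X : Pt n → Fin n → ℝ}
    (hX : ∀ i, Sm (fun x => X x i)) (x : Pt n) (m : Fin n) :
    pd m (fun y => innerC g X X y) x = 2 * innerC g X (fun y a => cdCov g X y a m) x := by
  rw [pd_inner hs hp hg hX hX]
  have : ∑ i, ∑ j, ginv g x i j * (cdCov g X x i m * X x j)
      = ∑ i, ∑ j, ginv g x i j * (X x i * cdCov g X x j m) := by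
    rw [Finset.sum_comm]
    exact Finset.sum_congr rfl fun i _ => Finset.sum_congr rfl fun j _ => by
      rw [ginv_symm hs hp x j i]; ring
  simp only [mul_add, Finset.sum_add_distrib, this, innerC]
  simp only [mul_assoc]
  ring

lemma cdCov_cdCov (x : Pt n) (X : Pt n → Fin n → ℝ) (a j k : Fin n) :
    cdCov g (fun y b => cdCov g X y b j) x a k
      = cdCov2 g X x a j k + ∑ l, chr g x l j k * cdCov g X x a l := by
  simp only [cdCov2, cd2]
  rw [cdCov]
  ring

lemma hess_normsq (hs : symT g) (hp : posdef g) (hg : smoothT g) {X : Pt n → Fin n → ℝ}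
    (hX : ∀ i, Sm (fun x => X x i)) (x : Pt n) (j k : Fin n) :
    hess g (fun y => innerC g X X y) x j k
      = 2 * ∑ a, ∑ b, ginv g x a b *
        (cdCov g X x a k * cdCov g X x b j + X x a * cdCov2 g X x b j k) := by
  unfold hess
  rw [cdCov]
  have e : (fun y => pd j (fun z => innerC g X X z) y)
      = fun y => 2 * innerC g X (fun y a => cdCov g X y a j) y := by
    funext y; exact pd_normsq hs hp hg hX y j
  have hc : ∀ i, Sm (fun x => (fun y a => cdCov g X y a j) x i) := fun i => cdCov_sm hs hp hg hX i j
  rw [e, pd_mul' contDiff_const (innerC_sm hs hp hg hX hc), pd_const',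
    pd_inner hs hp hg hX hc]
  simp only [pd_normsq hs hp hg hX, cdCov_cdCov]
  have A : ∑ l, chr g x l j k * (2 * innerC g X (fun y a => cdCov g X y a l) x)
      = 2 * ∑ a, ∑ b, ginv g x a b * (X x a * ∑ l, chr g x l j k * cdCov g X x b l) := by
    simp only [innerC, Finset.mul_sum]
    rw [Finset.sum_comm]
    refine Finset.sum_congr rfl fun a _ => ?_
    rw [Finset.sum_comm]
    exact Finset.sum_congr rfl fun b _ => Finset.sum_congr rfl fun l _ => by ring
  rw [A]
  simp only [mul_add, Finset.sum_add_distrib]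
  ring

lemma sumR1 (F : Fin n → Fin n → Fin n → Fin n → ℝ) :
    ∑ a, ∑ b, ∑ j, ∑ k, F a b j k = ∑ j, ∑ k, ∑ a, ∑ b, F a b j k := by
  calc _ = ∑ a, ∑ j, ∑ b, ∑ k, F a b j k := Finset.sum_congr rfl fun _ _ => Finset.sum_comm
    _ = ∑ j, ∑ a, ∑ b, ∑ k, F a b j k := Finset.sum_comm
    _ = ∑ j, ∑ a, ∑ k, ∑ b, F a b j k := Finset.sum_congr rfl fun _ _ =>
        Finset.sum_congr rfl fun _ _ => Finset.sum_comm
    _ = _ := Finset.sum_congr rfl fun _ _ => Finset.sum_comm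

lemma sumR2 (F : Fin n → Fin n → Fin n → Fin n → ℝ) :
    ∑ i, ∑ j, ∑ k, ∑ l, F i j k l = ∑ l, ∑ j, ∑ i, ∑ k, F i j k l := by
  calc _ = ∑ i, ∑ j, ∑ l, ∑ k, F i j k l := Finset.sum_congr rfl fun _ _ =>
        Finset.sum_congr rfl fun _ _ => Finset.sum_comm
    _ = ∑ j, ∑ i, ∑ l, ∑ k, F i j k l := Finset.sum_comm
    _ = ∑ j, ∑ l, ∑ i, ∑ k, F i j k l := Finset.sum_congr rfl fun _ _ => Finset.sum_comm
    _ = _ := Finset.sum_comm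

lemma sum4_congr {F G : Fin n → Fin n → Fin n → Fin n → ℝ} (h : ∀ a b c d, F a b c d = G a b c d) :
    ∑ i, ∑ j, ∑ k, ∑ l, F i j k l = ∑ i, ∑ j, ∑ k, ∑ l, G i j k l := by
  simp only [h]

lemma P_aux (G : Fin n → Fin n → ℝ) (X A B d : Fin n → ℝ) (c e S : ℝ)
    (hS : ∑ i, ∑ j, G i j * X i * d j = S) :
    ∑ i, ∑ j, G i j * X i * (-(A j) - c * B j + e * S * d j)
     = -(∑ i, ∑ j, G i j * X i * A j) - c * (∑ i, ∑ j, G i j * X i * B j) + e * S^2 := by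
  have h : ∀ i j, G i j * X i * (-(A j) - c * B j + e * S * d j)
    = -(G i j * X i * A j) - c * (G i j * X i * B j) + e * S * (G i j * X i * d j) :=
    fun i j => by ring
  simp only [h, Finset.sum_add_distrib, Finset.sum_sub_distrib, Finset.sum_neg_distrib,
    ← Finset.mul_sum, hS]
  ring

lemma identity (hs : symT g) (hp : posdef g) (hg : smoothT g) {X : Pt n → Fin n → ℝ}
    (hX : ∀ i, Sm (fun x => X x i)) (u : Pt n → ℝ) (x : Pt n) :
      innerC g X (fun y a => GammaOp g u X y a) x
        = -(1/2) * lapf g (fun y => innerC g X X y) x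
          - (1/2) * (u x)⁻¹ *
              innerC g (fun y a => pd a u y) (fun y a => pd a (fun z => innerC g X X z) y) x
          + (∑ i, ∑ j, ∑ k, ∑ l, ginv g x i k * ginv g x j l *
              cdCov g X x i j * cdCov g X x k l)
          + ((u x)^2)⁻¹ * (∑ j, ∑ k, ginv g x j k * X x j * pd k u x)^2 := by
  have L : lapf g (fun y => innerC g X X y) x
      = 2 * ∑ a, ∑ b, ginv g x a b * X x a * (∑ j, ∑ k, ginv g x j k * cdCov2 g X x b j k)
       + 2 * ∑ i, ∑ j, ∑ k, ∑ l, ginv g x i k * ginv g x j l *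
              cdCov g X x i j * cdCov g X x k l := by
    have L1 : ∑ a, ∑ b, ginv g x a b * X x a * (∑ j, ∑ k, ginv g x j k * cdCov2 g X x b j k)
        = ∑ j, ∑ k, ∑ a, ∑ b, ginv g x j k * (ginv g x a b * (X x a * cdCov2 g X x b j k)) := by
      simp only [Finset.mul_sum]
      rw [sumR1]
      exact sum4_congr fun _ _ _ _ => by ring
    have L2 : ∑ i, ∑ j, ∑ k, ∑ l, ginv g x i k * ginv g x j l *
              cdCov g X x i j * cdCov g X x k l
        = ∑ j, ∑ k, ∑ a, ∑ b, ginv g x j k * (ginv g x a b * 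
          (cdCov g X x a k * cdCov g X x b j)) := by
      rw [sumR2]
      refine sum4_congr fun j k a b => ?_
      rw [ginv_symm hs hp x k j]; ring
    rw [L1, L2]
    unfold lapf
    simp only [hess_normsq hs hp hg hX, Finset.mul_sum, mul_add, Finset.sum_add_distrib]
    rw [add_comm]
    congr 1 <;> exact Finset.sum_congr rfl fun a _ => Finset.sum_congr rfl fun b _ =>
      Finset.sum_congr rfl fun a _ => Finset.sum_congr rfl fun b _ => by ring
  have N : innerC g (fun y a => pd a u y) (fun y a => pd a (fun z => innerC g X X z) y) x
      = 2 * ∑ a, ∑ b, ginv g x a b * X x a *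
        (∑ j, ∑ k, ginv g x j k * pd k u x * cdCov g X x b j) := by
    rw [innerC]
    simp only [pd_normsq hs hp hg hX]
    simp only [innerC, Finset.mul_sum]
    rw [Finset.sum_comm, sumR1]
    refine sum4_congr fun a b c d => ?_
    rw [ginv_symm hs hp x d c]; ring
  have P : innerC g X (fun y a => GammaOp g u X y a) x
      = -(∑ a, ∑ b, ginv g x a b * X x a * (∑ j, ∑ k, ginv g x j k * cdCov2 g X x b j k))
        - (u x)⁻¹ * (∑ a, ∑ b, ginv g x a b * X x a *
        (∑ j, ∑ k, ginv g x j k * pd k u x * cdCov g X x b j))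
        + ((u x)^2)⁻¹ * (∑ j, ∑ k, ginv g x j k * X x j * pd k u x)^2 := by
    rw [innerC]
    exact P_aux (ginv g x) (X x) _ _ (fun k => pd k u x) _ _ _ rfl
  rw [P, L, N]
  ring

lemma fderiv_eq_sum (f : Pt n → ℝ) (x v : Pt n) : fderiv ℝ f x v = ∑ i, v i * pd i f x := by
  have := LinearMap.pi_apply_eq_sum_univ (fderiv ℝ f x).toLinearMap v
  simp only [ContinuousLinearMap.coe_coe, smul_eq_mul] at this
  rw [this]
  refine Finset.sum_congr rfl fun i _ => ?_
  rw [pd]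
  congr 2
  funext j
  simp [Pi.single_apply, eq_comm]

lemma deriv_line {f : Pt n → ℝ} (hf : Sm f) (p v : Pt n) (t : ℝ) :
    HasDerivAt (fun t : ℝ => f (p + t • v)) (∑ i, v i * pd i f (p + t • v)) t := by
  rw [← fderiv_eq_sum]
  have h1 : HasDerivAt (fun t : ℝ => p + t • v) v t := by
    simpa using ((hasDerivAt_id t).smul_const v).const_add p
  exact (hf.da _).hasFDerivAt.comp_hasDerivAt t h1

lemma hess_le {F : Pt n → ℝ} (hF : Sm F) {p : Pt n} (hm : IsLocalMax F p) (v : Pt n) :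
    ∑ i, ∑ j, v i * v j * pd j (pd i F) p ≤ 0 := by
  by_contra hcon
  push Not at hcon
  set φ : ℝ → ℝ := fun t => F (p + t • v) with hφ
  have d1 : deriv φ = fun t => ∑ i, v i * pd i F (p + t • v) :=
    funext fun t => (deriv_line hF p v t).deriv
  have d2 : deriv (deriv φ) 0 = ∑ i, ∑ j, v i * v j * pd j (pd i F) p := by
    rw [d1]
    have : HasDerivAt (fun t : ℝ => ∑ i, v i * pd i F (p + t • v))
        (∑ i, v i * ∑ j, v j * pd j (pd i F) (p + (0:ℝ) • v)) 0 :=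
      HasDerivAt.fun_sum fun i _ => (deriv_line (hF.pd i) p v 0).const_mul (v i)
    rw [this.deriv]
    simp only [zero_smul, add_zero, Finset.mul_sum, mul_assoc]
  have hc : ContinuousAt (fun t : ℝ => p + t • v) 0 := by fun_prop
  have hmax : IsLocalMax φ 0 := by
    have h0 : Tendsto (fun t : ℝ => p + t • v) (nhds 0) (nhds p) := by
      simpa [ContinuousAt] using hc
    have := h0.eventually hm
    filter_upwards [this] with t ht
    simpa [hφ] using ht
  have hmin : IsLocalMin φ 0 :=
    isLocalMin_of_deriv_deriv_pos (by rw [d2]; exact hcon) hmax.deriv_eq_zero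
      (deriv_line hF p v 0).continuousAt
  have heq : φ =ᶠ[nhds 0] fun _ => φ 0 := by
    filter_upwards [hmax, hmin] with t h1 h2
    exact le_antisymm h1 h2
  have : deriv (deriv φ) 0 = 0 := by
    rw [heq.deriv.deriv_eq]; simp
  rw [d2] at this
  linarith

lemma trace_hess_le (hs : symT g) (hp : posdef g) {F : Pt n → ℝ} (hF : Sm F) {p : Pt n}
    (hm : IsLocalMax F p) : ∑ i, ∑ j, ginv g p i j * pd j (pd i F) p ≤ 0 := by
  obtain ⟨B, hB⟩ := ginv_fac hs hp p
  have : ∑ i, ∑ j, ginv g p i j * pd j (pd i F) p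
      = ∑ k, ∑ i, ∑ j, B k i * B k j * pd j (pd i F) p := by
    simp only [hB, Finset.sum_mul]
    rw [Finset.sum_comm' (t' := Finset.univ) (s' := fun _ => Finset.univ) (by simp)]
    rw [Finset.sum_comm]
    rw [Finset.sum_comm (γ := Fin n) (s := Finset.univ) (t := Finset.univ)
      (f := fun k i => ∑ j, B k i * B k j * pd j (pd i F) p)]
    exact Finset.sum_congr rfl fun i _ => Finset.sum_comm
  rw [this]
  exact Finset.sum_nonpos fun k _ => hess_le hF hm (B k)

lemma grad_nonneg (hs : symT g) (hp : posdef g) (x : Pt n) (T : Fin n → Fin n → ℝ) :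
    0 ≤ ∑ i, ∑ j, ∑ k, ∑ l, ginv g x i k * ginv g x j l * T i j * T k l := by
  obtain ⟨B, hB⟩ := ginv_fac hs hp x
  have h : ∀ v : Fin n → ℝ, 0 ≤ ∑ j, ∑ l, ginv g x j l * v j * v l := by
    intro v
    by_cases hv : v = 0
    · simp [hv]
    · exact (ginv_pos hs hp x v hv).le
  have e : ∑ i, ∑ j, ∑ k, ∑ l, ginv g x i k * ginv g x j l * T i j * T k l
     = ∑ m, ∑ j, ∑ l, ginv g x j l * (∑ i, B m i * T i j) * (∑ k, B m k * T k l) := by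
    have e1 : ∀ j l, ∑ i, ∑ k, ginv g x i k * ginv g x j l * T i j * T k l
        = ∑ m, ginv g x j l * (∑ i, B m i * T i j) * (∑ k, B m k * T k l) := by
      intro j l
      have q : ∀ m, ginv g x j l * (∑ i, B m i * T i j) * (∑ k, B m k * T k l)
          = ∑ i, ∑ k, (B m i * B m k) * (ginv g x j l * T i j * T k l) := by
        intro m
        rw [mul_assoc, Finset.sum_mul_sum, Finset.mul_sum]
        refine Finset.sum_congr rfl fun i _ => ?_
        rw [Finset.mul_sum]
        exact Finset.sum_congr rfl fun k _ => by ring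
      simp only [q]
      symm
      rw [Finset.sum_comm]
      refine Finset.sum_congr rfl fun i _ => ?_
      rw [Finset.sum_comm]
      refine Finset.sum_congr rfl fun k _ => ?_
      rw [← Finset.sum_mul, ← hB i k]
      ring
    calc _ = ∑ j, ∑ l, ∑ i, ∑ k, ginv g x i k * ginv g x j l * T i j * T k l := by
          rw [Finset.sum_comm]
          refine Finset.sum_congr rfl fun j _ => ?_
          rw [Finset.sum_comm (s := (Finset.univ : Finset (Fin n))) (t := Finset.univ)
            (f := fun l i => ∑ k, ginv g x i k * ginv g x j l * T i j * T k l)]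
          exact Finset.sum_congr rfl fun i _ => Finset.sum_comm
      _ = ∑ j, ∑ l, ∑ m, ginv g x j l * (∑ i, B m i * T i j) * (∑ k, B m k * T k l) := by
          simp only [e1]
      _ = ∑ j, ∑ m, ∑ l, ginv g x j l * (∑ i, B m i * T i j) * (∑ k, B m k * T k l) :=
          Finset.sum_congr rfl fun _ _ => Finset.sum_comm
      _ = _ := Finset.sum_comm
  rw [e]
  exact Finset.sum_nonneg fun m _ => h _

lemma ginv_tendsto (hAF : ∀ i j, Tendsto (fun x => g x i j) (cocompact (Pt n))
      (nhds (if i = j then (1:ℝ) else 0))) (i j : Fin n) :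
    Tendsto (fun x => ginv g x i j) (cocompact (Pt n)) (nhds ((1 : Matrix (Fin n) (Fin n) ℝ) i j)) := by
  have h1 : Tendsto (fun x => Matrix.of (g x)) (cocompact (Pt n))
      (nhds (1 : Matrix (Fin n) (Fin n) ℝ)) := by
    refine tendsto_pi_nhds.2 fun i => tendsto_pi_nhds.2 fun j => ?_
    simpa [Matrix.one_apply] using hAF i j
  have hd : Tendsto (fun x => (Matrix.of (g x)).det) (cocompact (Pt n)) (nhds 1) := by
    have := ((continuous_id (X := Matrix (Fin n) (Fin n) ℝ)).matrix_det.tendsto 1).comp h1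
    simpa [Function.comp_def] using this
  have ha : Tendsto (fun x => (Matrix.of (g x)).adjugate i j) (cocompact (Pt n))
      (nhds ((1 : Matrix (Fin n) (Fin n) ℝ) i j)) := by
    have := (((continuous_id (X := Matrix (Fin n) (Fin n) ℝ)).matrix_adjugate.matrix_elem i j).tendsto
      1).comp h1
    simpa [Function.comp_def] using this
  have := (hd.inv₀ one_ne_zero).mul ha
  simpa [ginv, Matrix.inv_def] using this

lemma pd_w (lam : ℝ) (i0 k : Fin n) (c : ℝ) (x : Pt n) :
    pd k (fun y : Pt n => c * Real.exp (lam * y i0)) x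
      = (if k = i0 then c * lam else 0) * Real.exp (lam * x i0) := by
  have h : HasFDerivAt (fun y : Pt n => c * Real.exp (lam * y i0))
      (c • (Real.exp (lam * x i0) • (lam • ContinuousLinearMap.proj (R := ℝ) (φ := fun _ : Fin n => ℝ) i0))) x := by
    have h1 : HasFDerivAt (fun y : Pt n => y i0)
      (ContinuousLinearMap.proj (R := ℝ) (φ := fun _ : Fin n => ℝ) i0) x :=
      (ContinuousLinearMap.proj (R := ℝ) (φ := fun _ : Fin n => ℝ) i0).hasFDerivAt
    exact ((h1.const_mul lam).exp).const_mul c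
  rw [pd, h.fderiv]
  by_cases hk : k = i0
  · subst hk; simp; ring
  · have : i0 ≠ k := fun h => hk h.symm
    simp [hk, this]

lemma w_sm (lam c : ℝ) (i0 : Fin n) : Sm (fun y : Pt n => c * Real.exp (lam * y i0)) := by
  unfold Sm; fun_prop

/-- Weak maximum principle. -/
lemma maxprinc (hs : symT g) (hp : posdef g) (hg : smoothT g) (i0 : Fin n) {f : Pt n → ℝ}
    (hf : Sm f) {E : Set (Pt n)} (hE : IsOpen E) (b : Fin n → Pt n → ℝ)
    (hb : ∀ k, Continuous (b k)) (hbd : ∀ x ∈ frontier E, f x = 0)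
    (hinf : Tendsto f (cocompact (Pt n)) (nhds 0))
    (hL : ∀ x ∈ E, 0 ≤ ∑ i, ∑ j, ginv g x i j * pd j (pd i f) x + ∑ k, b k x * pd k f x) :
    ∀ x ∈ E, f x ≤ 0 := by
  intro x0 hx0
  by_contra hcon
  push Not at hcon
  set m := f x0 with hm
  set K : Set (Pt n) := closure E ∩ {x | m / 2 ≤ f x} with hK
  have hfc : Continuous f := hf.continuous
  have hKclosed : IsClosed K := isClosed_closure.inter (isClosed_le continuous_const hfc)
  have hKcomp : IsCompact K := by
    have h1 : ∀ᶠ x in cocompact (Pt n), f x < m / 2 := hinf.eventually_lt_const (by linarith)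
    obtain ⟨C, hC, hC'⟩ := mem_cocompact.1 h1
    refine hC.of_isClosed_subset hKclosed fun x hx => ?_
    by_contra hxC
    have := hC' hxC
    have h2 := hx.2
    simp only [Set.mem_ofPred_eq] at this h2
    linarith
  have hKE : K ⊆ E := by
    intro x hx
    by_contra hxE
    have hfr : x ∈ frontier E := by rw [hE.frontier_eq]; exact ⟨hx.1, hxE⟩
    have h2 := hx.2
    simp only [Set.mem_ofPred_eq, hbd x hfr] at h2
    linarith
  have hx0K : x0 ∈ K := ⟨subset_closure hx0, by simp only [Set.mem_ofPred_eq]; linarith⟩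
  have hg00 : ∀ x, 0 < ginv g x i0 i0 := by
    intro x
    have := ginv_pos hs hp x (Pi.single i0 1) (by simp)
    simpa [Pi.single_apply] using this
  have hgc : Continuous (fun x => ginv g x i0 i0) := (ginv_sm hs hp hg i0 i0).continuous
  obtain ⟨C, hC⟩ := (hKcomp.image (f := fun x => -(b i0 x) / ginv g x i0 i0)
    (((hb i0).neg).div hgc fun x => (hg00 x).ne')).bddAbove
  set lam := max C 0 + 1 with hlam
  have hlampos : 0 < lam := by have := le_max_right C 0; linarith
  have hlamK : ∀ x ∈ K, 0 < lam * ginv g x i0 i0 + b i0 x := by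
    intro x hx
    have h1 : -(b i0 x) / ginv g x i0 i0 ≤ C := hC ⟨x, hx, rfl⟩
    have h2 : -(b i0 x) / ginv g x i0 i0 < lam := by have := le_max_left C 0; linarith
    rw [div_lt_iff₀ (hg00 x)] at h2
    linarith
  obtain ⟨W, hW⟩ := (hKcomp.image (f := fun x : Pt n => Real.exp (lam * x i0))
    (by fun_prop)).bddAbove
  have hWK : ∀ x ∈ K, Real.exp (lam * x i0) ≤ W := fun x hx => hW ⟨x, hx, rfl⟩
  have hWpos : 0 < W := (Real.exp_pos _).trans_le (hWK x0 hx0K)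
  set ε := m / (4 * W) with hε
  have hεpos : 0 < ε := by positivity
  have hεW : ε * W = m / 4 := by rw [hε]; field_simp
  set w : Pt n → ℝ := fun y => ε * Real.exp (lam * y i0) with hw
  have hwsm : Sm w := w_sm lam ε i0
  set F : Pt n → ℝ := fun y => f y + w y with hF
  have hFsm : Sm F := hf.add hwsm
  obtain ⟨p, hpK, hpmax⟩ := hKcomp.exists_isMaxOn ⟨x0, hx0K⟩ hFsm.continuous.continuousOn
  have hwp : 0 < w p := mul_pos hεpos (Real.exp_pos _)
  have hfp : m / 2 < f p := by
    have h1 : F x0 ≤ F p := hpmax hx0K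
    have h2 : 0 < w x0 := mul_pos hεpos (Real.exp_pos _)
    have h3 : w p ≤ m / 4 := by
      rw [← hεW]; exact mul_le_mul_of_nonneg_left (hWK p hpK) hεpos.le
    simp only [hF] at h1
    linarith
  have hpE := hKE hpK
  have hloc : IsLocalMax F p := by
    have h1 : ∀ᶠ y in nhds p, m / 2 < f y := hfc.continuousAt.eventually_const_lt hfp
    filter_upwards [h1, hE.mem_nhds hpE] with y hy hyE
    exact hpmax ⟨subset_closure hyE, hy.le⟩
  have hgrad : ∀ k, pd k f p = - pd k w p := by
    intro k
    have h1 : pd k F p = 0 := by rw [pd, hloc.fderiv_eq_zero]; simp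
    rw [hF, pd_add' hf hwsm] at h1
    linarith
  have hhess := trace_hess_le hs hp hFsm hloc
  have e1 : ∀ i j, pd j (pd i F) p = pd j (pd i f) p + pd j (pd i w) p := by
    intro i j
    have : pd i F = fun y => pd i f y + pd i w y := funext fun y => pd_add' hf hwsm i y
    rw [this, pd_add' (hf.pd i) (hwsm.pd i)]
  have e2 : ∀ i j, pd j (pd i w) p = if i = i0 then if j = i0 then lam ^ 2 * w p else 0 else 0 := by
    intro i j
    have : pd i w = fun y => (if i = i0 then ε * lam else 0) * Real.exp (lam * y i0) :=
      funext fun y => pd_w lam i0 i ε y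
    rw [this, pd_w]
    by_cases hi : i = i0 <;> by_cases hj : j = i0 <;> simp [hi, hj, hw]
    ring
  have e3 : ∀ k, pd k w p = if k = i0 then lam * w p else 0 := by
    intro k
    rw [hw, pd_w]
    by_cases hk : k = i0 <;> simp [hk]
    ring
  have hLp := hL p hpE
  simp only [hgrad, e3] at hLp
  simp only [e1, e2, mul_add, Finset.sum_add_distrib] at hhess
  simp at hLp hhess
  have h4 := mul_pos (mul_pos hlampos hwp) (hlamK p hpK)
  nlinarith

end geom

/-- for a vector field (covector) `X` on an asymptotically flat
exterior region `E` vanishing on the boundary and at infinity, with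
`Γ_{(g,u)}(X) = 0`, the pointwise identity
`⟨X, Γ(X)⟩ = -(1/2)Δ|X|² - (1/2)u⁻¹ ∇u·∇|X|² + |∇X|² + u⁻²(X(u))²`
holds, and consequently (by the strong maximum principle) `X ≡ 0` on `E`. -/
theorem statement7 {n : ℕ} (g : Pt n → Fin n → Fin n → ℝ) (u : Pt n → ℝ)
    (E : Set (Pt n)) (hE : IsOpen E) (hExt : IsCompact Eᶜ)
    (hgsym : symT g) (hgpos : posdef g) (hgsm : smoothT g)
    (husm : ContDiff ℝ (⊤ : ℕ∞) u) (hupos : ∀ x, 0 < u x)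
    -- asymptotic flatness of the region
    (hAF : ∀ i j, Tendsto (fun x => g x i j) (cocompact (Pt n))
      (nhds (if i = j then (1:ℝ) else 0)))
    (huInf : Tendsto u (cocompact (Pt n)) (nhds 1))
    (X : Pt n → Fin n → ℝ) (hXsm : ∀ i, ContDiff ℝ (⊤ : ℕ∞) (fun x => X x i))
    (hXbd : ∀ x ∈ frontier E, ∀ i, X x i = 0)
    (hXInf : ∀ i, Tendsto (fun x => X x i) (cocompact (Pt n)) (nhds 0))
    (hGamma : ∀ x ∈ E, ∀ i, GammaOp g u X x i = 0) :
    (∀ x ∈ E,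
      innerC g X (fun y a => GammaOp g u X y a) x
        = -(1/2) * lapf g (fun y => innerC g X X y) x
          - (1/2) * (u x)⁻¹ *
              innerC g (fun y a => pd a u y) (fun y a => pd a (fun z => innerC g X X z) y) x
          + (∑ i, ∑ j, ∑ k, ∑ l, ginv g x i k * ginv g x j l *
              cdCov g X x i j * cdCov g X x k l)
          + ((u x)^2)⁻¹ * (∑ j, ∑ k, ginv g x j k * X x j * pd k u x)^2) ∧
    (∀ x ∈ E, ∀ i, X x i = 0) := by
  refine ⟨fun x _ => identity hgsym hgpos hgsm hXsm u x, ?_⟩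
  intro x hx i0
  set f : Pt n → ℝ := fun y => innerC g X X y with hf
  have hfsm : Sm f := innerC_sm hgsym hgpos hgsm hXsm hXsm
  set b : Fin n → Pt n → ℝ := fun k y =>
    -(∑ i, ∑ j, ginv g y i j * chr g y k i j) + (u y)⁻¹ * ∑ i, ginv g y i k * pd i u y with hb
  have hbc : ∀ k, Continuous (b k) := by
    intro k
    refine ContDiff.continuous (𝕜 := ℝ) (n := ((⊤ : ℕ∞) : WithTop ℕ∞)) ?_
    refine ContDiff.add (ContDiff.neg (Sm.sum fun i => Sm.sum fun j =>
      (ginv_sm hgsym hgpos hgsm i j).mul (chr_sm hgsym hgpos hgsm k i j))) ?_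
    exact (husm.inv fun y => (hupos y).ne').mul (Sm.sum fun i =>
      (ginv_sm hgsym hgpos hgsm i k).mul (Sm.pd husm i))
  have hbd : ∀ y ∈ frontier E, f y = 0 := by
    intro y hy
    simp [hf, innerC, hXbd y hy]
  have hinf : Tendsto f (cocompact (Pt n)) (nhds 0) := by
    have : Tendsto f (cocompact (Pt n))
        (nhds (∑ i, ∑ j, (1 : Matrix (Fin n) (Fin n) ℝ) i j * 0 * 0)) :=
      tendsto_finsetSum _ fun i _ => tendsto_finsetSum _ fun j _ =>
        ((ginv_tendsto hAF i j).mul (hXInf i)).mul (hXInf j)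
    simpa using this
  have hL : ∀ y ∈ E, 0 ≤ ∑ i, ∑ j, ginv g y i j * pd j (pd i f) y + ∑ k, b k y * pd k f y := by
    intro y hy
    have hid := identity hgsym hgpos hgsm hXsm u y
    have h0 : innerC g X (fun y a => GammaOp g u X y a) y = 0 := by
      simp [innerC, hGamma y hy]
    have h1 := grad_nonneg hgsym hgpos y (cdCov g X y)
    have h2 : 0 ≤ ((u y)^2)⁻¹ * (∑ j, ∑ k, ginv g y j k * X y j * pd k u y)^2 := by positivity
    have h3 : lapf g f y = ∑ i, ∑ j, ginv g y i j * pd j (pd i f) y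
        + ∑ k, -(∑ i, ∑ j, ginv g y i j * chr g y k i j) * pd k f y := by
      have : ∑ k, -(∑ i, ∑ j, ginv g y i j * chr g y k i j) * pd k f y
          = -∑ i, ∑ j, ginv g y i j * ∑ k, chr g y k i j * pd k f y := by
        simp only [neg_mul, Finset.sum_neg_distrib, Finset.sum_mul, Finset.mul_sum]
        rw [Finset.sum_comm]
        congr 1
        refine Finset.sum_congr rfl fun i _ => ?_
        rw [Finset.sum_comm]
        exact Finset.sum_congr rfl fun j _ => Finset.sum_congr rfl fun k _ => by ring
      rw [this]
      simp only [lapf, hess, cdCov, mul_sub, Finset.sum_sub_distrib]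
      rw [sub_eq_add_neg]
    have h4 : (u y)⁻¹ * innerC g (fun y a => pd a u y) (fun y a => pd a f y) y
        = ∑ k, ((u y)⁻¹ * ∑ i, ginv g y i k * pd i u y) * pd k f y := by
      simp only [innerC]
      rw [Finset.sum_comm, Finset.mul_sum]
      refine Finset.sum_congr rfl fun k _ => ?_
      rw [mul_assoc, Finset.sum_mul]
    have h5 : ∑ k, b k y * pd k f y
        = ∑ k, -(∑ i, ∑ j, ginv g y i j * chr g y k i j) * pd k f y
          + ∑ k, ((u y)⁻¹ * ∑ i, ginv g y i k * pd i u y) * pd k f y := by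
      rw [← Finset.sum_add_distrib]
      exact Finset.sum_congr rfl fun k _ => by rw [hb]; ring
    rw [h0] at hid
    rw [h5, ← add_assoc, ← h3, ← h4]
    linarith
  have hle := maxprinc hgsym hgpos hgsm i0 hfsm hE b hbc hbd hinf hL x hx
  by_contra hne
  have hXne : X x ≠ 0 := fun h => hne (by rw [h]; rfl)
  have := ginv_pos hgsym hgpos x (X x) hXne
  simp only [hf, innerC] at hle
  linarith
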